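/- (Converse for deterministic power-constrained measurement matrices; equivalent form of Theorem 2 proved in Appendix B) Fix k ≥ 1, l ≥ 1, σa² > 0, σz² > 0, and W ∈ ℝ^{k×l} with all entries nonzero. Suppose there exist a sequence of deterministic matrices A^{(m)} ∈ ℝ^{n_m×m} satisfying the power constraint ‖A^{(m)}‖_F²/(n_m·m) ≤ σa², and a sequence of support recovery maps d^{(m)} : ℝ^{n_m×l} → 2^{[m]}, such that P{ d^{(m)}(A^{(m)} X(W,S) + Z) ≠ supp(X(W,S)) } → 0 as m → ∞ (probability over the random support S and the Gaussian noise Z). Then limsup_{m→∞} (log m)/n_m ≤ c(W). -/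

import Mathlib

open MeasureTheory ProbabilityTheory Matrix Filter
open scoped NNReal ENNReal

noncomputable section

/-- i.i.d. `N(0, v)` entries on an `n × m` array of reals. -/
def gaussMat (n m : ℕ) (v : ℝ≥0) : Measure (Fin n → Fin m → ℝ) :=
  Measure.pi fun _ : Fin n => Measure.pi fun _ : Fin m => gaussianReal 0 v

instance embMS (k m : ℕ) : MeasurableSpace (Fin k ↪ Fin m) := ⊤

/-- Uniform distribution on ordered `k`-tuples of distinct indices in `[m]`,
encoded as embeddings `Fin k ↪ Fin m`. -/
def uniformEmb (k m : ℕ) : Measure (Fin k ↪ Fin m) :=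
  ((Fintype.card (Fin k ↪ Fin m) : ℝ≥0))⁻¹ • Measure.count

/-- The sparse signal `X(W, S)`: row `S j` equals the `j`-th row of `W`, other rows zero. -/
def signal {k l m : ℕ} (W : Matrix (Fin k) (Fin l) ℝ) (s : Fin k ↪ Fin m) :
    Matrix (Fin m) (Fin l) ℝ :=
  Matrix.of fun i j => ∑ a : Fin k, if s a = i then W a j else 0

/-- The support `{S_1, …, S_k}` of the sparse signal. -/
def suppS {k m : ℕ} (s : Fin k ↪ Fin m) : Finset (Fin m) :=
  Finset.univ.map s

/-- Average error probability of the support recovery map `d`, over the random support,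
the Gaussian measurement matrix (i.i.d. `N(0, va)` entries) and the Gaussian noise
(i.i.d. `N(0, vz)` entries), for the measurement model `Y = A · X(W,S) + Z`. -/
def errProb (k l m n : ℕ) (va vz : ℝ≥0) (W : Matrix (Fin k) (Fin l) ℝ)
    (d : Matrix (Fin n) (Fin l) ℝ → Finset (Fin m)) : ℝ≥0∞ :=
  ((uniformEmb k m).prod ((gaussMat n m va).prod (gaussMat n l vz)))
    {p | d (Matrix.of p.2.1 * signal W p.1 + Matrix.of p.2.2) ≠ suppS p.1}

/-- `W_T^⊺ W_T` for a subset `T` of the rows of `W`. -/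
def gramSub {k l : ℕ} (W : Matrix (Fin k) (Fin l) ℝ) (T : Finset (Fin k)) :
    Matrix (Fin l) (Fin l) ℝ :=
  (W.submatrix (fun i : T => (i : Fin k)) id)ᵀ * W.submatrix (fun i : T => (i : Fin k)) id

/-- `c(W) = min_{∅ ≠ T ⊆ [k]} (1 / (2|T|)) log₂ det(I + (σa²/σz²) W_T^⊺ W_T)`. -/
def cW {k l : ℕ} (va vz : ℝ≥0) (W : Matrix (Fin k) (Fin l) ℝ) : ℝ :=
  ⨅ T : {T : Finset (Fin k) // T.Nonempty},
    (1 / (2 * ((T : Finset (Fin k)).card : ℝ))) *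
      Real.logb 2 (Matrix.det (1 + ((va : ℝ) / (vz : ℝ)) • gramSub W (T : Finset (Fin k))))

/-- Error probability for a deterministic measurement matrix `A`, averaged over the random
support and the Gaussian noise (i.i.d. `N(0, vz)` entries), for `Y = A · X(W,S) + Z`. -/
def errProbDet (k l m n : ℕ) (vz : ℝ≥0) (W : Matrix (Fin k) (Fin l) ℝ)
    (A : Matrix (Fin n) (Fin m) ℝ) (d : Matrix (Fin n) (Fin l) ℝ → Finset (Fin m)) : ℝ≥0∞ :=
  ((uniformEmb k m).prod (gaussMat n l vz))
    {p | d (A * signal W p.1 + Matrix.of p.2) ≠ suppS p.1}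
/-!
Fix a nonempty `T ⊆ [k]` and put `D = I + (σa² / σz²) W_Tᵀ W_T`. Replace the random support by `k`
independent uniform indices `s`; these are distinct with probability tending to one. Given `s`, the
output has law `P_s`, with independent Gaussian entries of variance `σz²` about the rows of
`A_s W`. Compare it with the law `Q_u` that depends only on the values `u` of `s` off `T`: its rows
are Gaussian with covariance `σz² D`, about the conditional mean of the rows of `A_s W` given `u`.
For every event `G`, `c P_s(G) ≤ KL(P_s ‖ Q_u) + exp(c) Q_u(G)`. Take `G` to be correct decoding
and `c = |T| log m`, and average over `s`. At most `k ^ k` index maps have a given image, so the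
last terms average to at most `k ^ k`, while the power constraint bounds the average divergence by
`(n / 2) log det D`. Dividing by `n |T|` and letting `m → ∞` gives the bound for this `T`.
-/

section ChangeOfMeasure

variable {Ω ι : Type*} [MeasurableSpace Ω] [Fintype ι]

lemma ofReal_prod_indicator_eq {Ω : ι → Type*} {f : ∀ i, Ω i → ℝ}
    (s : ∀ i, Set (Ω i)) (x : ∀ i, Ω i) :
    ENNReal.ofReal (∏ i, (s i).indicator (f i) (x i)) =
      (Set.univ.pi s).indicator (fun x ↦ ENNReal.ofReal (∏ i, f i (x i))) x := by
  by_cases hx : x ∈ Set.univ.pi s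
  · rw [Set.indicator_of_mem hx]
    exact congrArg _ (Finset.prod_congr rfl fun i _ ↦ Set.indicator_of_mem (hx i trivial) _)
  · obtain ⟨i, hi⟩ : ∃ i, x i ∉ s i := by simpa using hx
    rw [Set.indicator_of_notMem hx, Finset.prod_eq_zero (Finset.mem_univ i)
      (Set.indicator_of_notMem hi _), ENNReal.ofReal_zero]

lemma pi_withDensity_ofReal {Ω : ι → Type*} [∀ i, MeasurableSpace (Ω i)]
    (μ : ∀ i, Measure (Ω i)) [∀ i, SigmaFinite (μ i)] {f : ∀ i, Ω i → ℝ}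
    (hf_nonneg : ∀ i x, 0 ≤ f i x) (hf : ∀ i, Integrable (f i) (μ i)) :
    Measure.pi (fun i ↦ (μ i).withDensity fun x ↦ ENNReal.ofReal (f i x)) =
      (Measure.pi μ).withDensity fun x ↦ ENNReal.ofReal (∏ i, f i (x i)) := by
  have (i : ι) : IsFiniteMeasure ((μ i).withDensity fun x ↦ ENNReal.ofReal (f i x)) :=
    isFiniteMeasure_withDensity_ofReal (hf i).2
  have indicator_nonneg (i : ι) (s : Set (Ω i)) (x : Ω i) : 0 ≤ s.indicator (f i) x :=
    Set.indicator_nonneg (fun x _ ↦ hf_nonneg i x) x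
  refine Measure.pi_eq fun s hs ↦ ?_
  calc (Measure.pi μ).withDensity (fun x ↦ ENNReal.ofReal (∏ i, f i (x i))) (Set.univ.pi s)
      = ∫⁻ x, ENNReal.ofReal (∏ i, (s i).indicator (f i) (x i)) ∂Measure.pi μ := by
        rw [withDensity_apply _ (.univ_pi hs), ← lintegral_indicator (.univ_pi hs)]
        simp_rw [ofReal_prod_indicator_eq]
    _ = ENNReal.ofReal (∏ i, ∫ x, (s i).indicator (f i) x ∂μ i) := by
        rw [← integral_fintype_prod_eq_prod, ofReal_integral_eq_lintegral_ofReal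
          (.fintype_prod_dep fun i ↦ (hf i).indicator (hs i))
          (ae_of_all _ fun x ↦ Finset.prod_nonneg fun i _ ↦ indicator_nonneg i _ _)]
    _ = ∏ i, (μ i).withDensity (fun x ↦ ENNReal.ofReal (f i x)) (s i) := by
        rw [ENNReal.ofReal_prod_of_nonneg fun i _ ↦ integral_nonneg (indicator_nonneg i _)]
        refine Finset.prod_congr rfl fun i _ ↦ ?_
        rw [withDensity_apply _ (hs i), integral_indicator (hs i),
          ofReal_integral_eq_lintegral_ofReal (hf i).integrableOn (ae_of_all _ (hf_nonneg i))]

lemma integrable_exp_of_withDensity {P Q : Measure Ω} [IsFiniteMeasure Q] {f : Ω → ℝ}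
    (hf : AEMeasurable f P) (hQ : Q = P.withDensity fun x ↦ ENNReal.ofReal (Real.exp (f x))) :
    Integrable (fun x ↦ Real.exp (f x)) P := by
  refine (lintegral_ofReal_ne_top_iff_integrable hf.exp.aestronglyMeasurable
    (ae_of_all _ fun _ ↦ (Real.exp_pos _).le)).mp ?_
  rw [← setLIntegral_univ, ← withDensity_apply _ .univ, ← hQ]
  exact measure_ne_top Q _

lemma setIntegral_exp_eq_measureReal_of_withDensity {P Q : Measure Ω} {f : Ω → ℝ}
    (hf : AEMeasurable f P) (hQ : Q = P.withDensity fun x ↦ ENNReal.ofReal (Real.exp (f x)))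
    {s : Set Ω} (hs : MeasurableSet s) : ∫ x in s, Real.exp (f x) ∂P = Q.real s := by
  rw [integral_eq_lintegral_of_nonneg_ae (ae_of_all _ fun _ ↦ (Real.exp_pos _).le)
    hf.exp.aestronglyMeasurable.restrict, hQ, measureReal_def, withDensity_apply _ hs]

-- `log r ≤ r - 1`, applied to `r = exp c * dQ/dP` on `s` and to `r = dQ/dP` off `s`.
lemma mul_measureReal_le_of_withDensity_exp {P Q : Measure Ω} [IsProbabilityMeasure P]
    [IsProbabilityMeasure Q] {f : Ω → ℝ} (hf : Integrable f P)
    (hQ : Q = P.withDensity fun x ↦ ENNReal.ofReal (Real.exp (f x)))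
    {s : Set Ω} (hs : MeasurableSet s) (c : ℝ) :
    c * P.real s ≤ -∫ x, f x ∂P + Real.exp c * Q.real s := by
  have hexp := integrable_exp_of_withDensity hf.aemeasurable hQ
  have pointwise (x : Ω) : c * s.indicator 1 x + f x ≤
      Real.exp (f x) + Real.exp c * s.indicator (fun x ↦ Real.exp (f x)) x - 1 := by
    by_cases hx : x ∈ s
    · have := Real.add_one_le_exp (c + f x)
      simp only [Set.indicator_of_mem hx, Pi.one_apply, ← Real.exp_add]
      linarith [Real.exp_pos (f x)]
    · simpa [hx, le_sub_iff_add_le] using Real.add_one_le_exp (f x)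
  have hint_s : Integrable (fun x ↦ c * s.indicator 1 x) P :=
    ((integrable_const (1 : ℝ)).indicator hs).const_mul c
  have hint_exp_s : Integrable
      (fun x ↦ Real.exp c * s.indicator (fun x ↦ Real.exp (f x)) x) P :=
    (hexp.indicator hs).const_mul _
  have total : ∫ x, Real.exp (f x) ∂P = 1 := by
    rw [← setIntegral_univ, setIntegral_exp_eq_measureReal_of_withDensity hf.aemeasurable hQ .univ,
      probReal_univ]
  have := integral_mono (hint_s.add hf) ((hexp.add hint_exp_s).sub (integrable_const 1)) pointwise
  rw [integral_add' hint_s hf, integral_sub' (hexp.add hint_exp_s) (integrable_const 1),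
    integral_add' hexp hint_exp_s, integral_const_mul, integral_const_mul,
    integral_indicator_one hs, integral_indicator hs, total,
    setIntegral_exp_eq_measureReal_of_withDensity hf.aemeasurable hQ hs, integral_const,
    probReal_univ, one_smul] at this
  linarith

lemma mul_measureReal_pi_le_of_withDensity_exp {Ω : ι → Type*} [∀ i, MeasurableSpace (Ω i)]
    {P Q : ∀ i, Measure (Ω i)} [∀ i, IsProbabilityMeasure (P i)]
    [∀ i, IsProbabilityMeasure (Q i)] {f : ∀ i, Ω i → ℝ} (hf : ∀ i, Integrable (f i) (P i))
    (hQ : ∀ i, Q i = (P i).withDensity fun x ↦ ENNReal.ofReal (Real.exp (f i x)))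
    {s : Set (∀ i, Ω i)} (hs : MeasurableSet s) (c : ℝ) :
    c * (Measure.pi P).real s ≤
      ∑ i, -∫ x, f i x ∂P i + Real.exp c * (Measure.pi Q).real s := by
  have hfi (i : ι) : Integrable (fun x ↦ f i (x i)) (Measure.pi P) :=
    integrable_comp_eval (hf i)
  have hpi : Measure.pi Q = (Measure.pi P).withDensity
      fun x ↦ ENNReal.ofReal (Real.exp (∑ i, f i (x i))) := by
    simp_rw [funext hQ, Real.exp_sum]
    exact pi_withDensity_ofReal P (fun i x ↦ (Real.exp_pos _).le)
      fun i ↦ integrable_exp_of_withDensity (hf i).aemeasurable (hQ i)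
  convert mul_measureReal_le_of_withDensity_exp (integrable_finsetSum _ fun i _ ↦ hfi i) hpi hs c
    using 2
  rw [integral_finsetSum _ fun i _ ↦ hfi i, Finset.sum_neg_distrib]
  simp_rw [integral_comp_eval (hf _).aestronglyMeasurable]

open scoped Classical in
lemma sum_measureReal_le_of_forall_card_le {S : Type*} {Q : Measure Ω} [IsProbabilityMeasure Q]
    (t : Finset S) {G : S → Set Ω} (hG : ∀ s, MeasurableSet (G s)) {N : ℕ}
    (hN : ∀ y, {s ∈ t | y ∈ G s}.card ≤ N) : ∑ s ∈ t, Q.real (G s) ≤ N := by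
  have hint (s : S) : Integrable ((G s).indicator (1 : Ω → ℝ)) Q :=
    (integrable_const 1).indicator (hG s)
  calc ∑ s ∈ t, Q.real (G s) = ∫ y, ∑ s ∈ t, (G s).indicator 1 y ∂Q := by
        rw [integral_finsetSum _ fun s _ ↦ hint s]
        simp_rw [integral_indicator_one (hG _)]
    _ ≤ ∫ _, (N : ℝ) ∂Q := by
        refine integral_mono (integrable_finsetSum _ fun s _ ↦ hint s) (integrable_const _)
          fun y ↦ ?_
        simpa [Set.indicator_apply] using hN y
    _ = N := by simp

open scoped Classical Finset BigOperators in
lemma mul_expect_measureReal_le_of_forall_card_le {S U : Type*} [Fintype S] [Fintype U]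
    {P : S → Measure Ω} {Q : U → Measure Ω} [∀ u, IsProbabilityMeasure (Q u)] (r : S → U)
    {G : S → Set Ω} (hG : ∀ s, MeasurableSet (G s)) {N : ℕ}
    (hN : ∀ y, #{s | y ∈ G s} ≤ N) {I : S → ℝ} {c : ℝ}
    (hPQ : ∀ s, c * (P s).real (G s) ≤ I s + Real.exp c * (Q (r s)).real (G s)) :
    c * 𝔼 s, (P s).real (G s) ≤
      𝔼 s, I s + Real.exp c * (Fintype.card U * N / Fintype.card S) := by
  have hQ : ∑ s, (Q (r s)).real (G s) ≤ Fintype.card U * N :=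
    calc ∑ s, (Q (r s)).real (G s) = ∑ u, ∑ s with r s = u, (Q u).real (G s) := by
          rw [← Finset.sum_fiberwise (g := r)]
          exact Finset.sum_congr rfl fun u _ ↦ Finset.sum_congr rfl fun s hs ↦ by
            rw [(Finset.mem_filter.mp hs).2]
      _ ≤ ∑ _u : U, (N : ℝ) := Finset.sum_le_sum fun u _ ↦
          sum_measureReal_le_of_forall_card_le _ hG fun y ↦
            (Finset.card_le_card (by gcongr; exact Finset.filter_subset _ _)).trans (hN y)
      _ = Fintype.card U * N := by simp
  calc c * 𝔼 s, (P s).real (G s) = 𝔼 s, c * (P s).real (G s) := Finset.mul_expect _ _ _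
    _ ≤ 𝔼 s, (I s + Real.exp c * (Q (r s)).real (G s)) := Finset.expect_le_expect fun s _ ↦ hPQ s
    _ = 𝔼 s, I s + Real.exp c * ((∑ s, (Q (r s)).real (G s)) / Fintype.card S) := by
        rw [Finset.expect_add_distrib, ← Finset.mul_expect, Fintype.expect_eq_sum_div_card
          fun s ↦ (Q (r s)).real (G s)]
    _ ≤ _ := by gcongr

end ChangeOfMeasure

section QuadraticForm

lemma integral_sub_const_mul_sub_const {Ω : Type*} [MeasurableSpace Ω] {P : Measure Ω}
    [IsProbabilityMeasure P] {X Y : Ω → ℝ} (hX : MemLp X 2 P) (hY : MemLp Y 2 P) (b c : ℝ) :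
    ∫ ω, (X ω - b) * (Y ω - c) ∂P = cov[X, Y; P] + (P[X] - b) * (P[Y] - c) := by
  have integral_sub_const {X : Ω → ℝ} (hX : MemLp X 2 P) (b : ℝ) :
      ∫ ω, (X ω - b) ∂P = P[X] - b := by
    rw [integral_sub (hX.integrable one_le_two) (integrable_const _), integral_const,
      probReal_univ, one_smul]
  rw [← covariance_sub_const_left (hX.integrable one_le_two) b,
    ← covariance_sub_const_right (hY.integrable one_le_two) c, ← integral_sub_const hX,
    ← integral_sub_const hY]
  exact sub_eq_iff_eq_add.mp
    (covariance_eq_sub (hX.sub (memLp_const b)) (hY.sub (memLp_const c))).symm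

variable {Ω ι : Type*} [MeasurableSpace Ω] [Fintype ι] {P : Measure Ω} {X : ι → Ω → ℝ}

lemma dotProduct_mulVec_self_eq_sum (K : Matrix ι ι ℝ) (x : ι → ℝ) :
    x ⬝ᵥ K *ᵥ x = ∑ i, ∑ j, K i j * (x i * x j) := by
  simp only [dotProduct, mulVec, Finset.mul_sum]
  exact Finset.sum_congr rfl fun i _ ↦ Finset.sum_congr rfl fun j _ ↦ by ring

lemma integrable_quadraticForm_sub [IsFiniteMeasure P] (hX : ∀ i, MemLp (X i) 2 P)
    (K : Matrix ι ι ℝ) (b : ι → ℝ) :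
    Integrable (fun ω ↦ ((fun i ↦ X i ω) - b) ⬝ᵥ K *ᵥ ((fun i ↦ X i ω) - b)) P := by
  simp_rw [dotProduct_mulVec_self_eq_sum]
  exact integrable_finsetSum _ fun i _ ↦ integrable_finsetSum _ fun j _ ↦
    (((hX i).sub (memLp_const (b i))).integrable_mul ((hX j).sub (memLp_const (b j)))).const_mul _

lemma integral_quadraticForm_sub [IsProbabilityMeasure P] (hX : ∀ i, MemLp (X i) 2 P)
    (K : Matrix ι ι ℝ) (b : ι → ℝ) :
    ∫ ω, ((fun i ↦ X i ω) - b) ⬝ᵥ K *ᵥ ((fun i ↦ X i ω) - b) ∂P =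
      ∑ i, ∑ j, K i j * cov[X i, X j; P] +
        ((fun i ↦ P[X i]) - b) ⬝ᵥ K *ᵥ ((fun i ↦ P[X i]) - b) := by
  have hXb (i j : ι) : Integrable (fun ω ↦ K i j * ((X i ω - b i) * (X j ω - b j))) P :=
    (((hX i).sub (memLp_const (b i))).integrable_mul ((hX j).sub (memLp_const (b j)))).const_mul _
  simp only [dotProduct_mulVec_self_eq_sum, Pi.sub_apply, ← Finset.sum_add_distrib, ← mul_add]
  rw [integral_finsetSum _ fun i _ ↦ integrable_finsetSum _ fun j _ ↦ hXb i j]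
  simp_rw [integral_finsetSum _ fun j _ ↦ hXb _ j, integral_const_mul,
    integral_sub_const_mul_sub_const (hX _) (hX _)]

end QuadraticForm

section GaussianVector

variable {ι : Type*} [Fintype ι]

lemma memLp_eval_pi_gaussianReal (v : ℝ≥0) (a : ι → ℝ) (i : ι) :
    MemLp (fun y : ι → ℝ ↦ y i) 2 (Measure.pi fun i ↦ gaussianReal (a i) v) :=
  (memLp_id_gaussianReal (μ := a i) (v := v) 2).comp_measurePreserving (measurePreserving_eval _ i)

lemma covariance_eval_pi_gaussianReal [DecidableEq ι] (v : ℝ≥0) (a : ι → ℝ) (i j : ι) :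
    cov[fun y : ι → ℝ ↦ y i, fun y ↦ y j; Measure.pi fun i ↦ gaussianReal (a i) v] =
      if i = j then (v : ℝ) else 0 := by
  split_ifs with hij
  · subst hij
    rw [covariance_self (measurable_pi_apply i).aemeasurable]
    exact ((measurePreserving_eval (fun i ↦ gaussianReal (a i) v) i).variance_fun_comp
      aemeasurable_id).trans variance_id_gaussianReal
  · exact ((iIndepFun_pi fun i ↦ aemeasurable_id).indepFun hij).covariance_eq_zero
      (memLp_eval_pi_gaussianReal v a i) (memLp_eval_pi_gaussianReal v a j)

lemma integral_quadraticForm_sub_pi_gaussianReal (v : ℝ≥0) (a b : ι → ℝ) (K : Matrix ι ι ℝ) :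
    ∫ y, (y - b) ⬝ᵥ K *ᵥ (y - b) ∂(Measure.pi fun i ↦ gaussianReal (a i) v) =
      v * K.trace + (a - b) ⬝ᵥ K *ᵥ (a - b) := by
  classical
  have hmean (i : ι) : ∫ y : ι → ℝ, y i ∂(Measure.pi fun i ↦ gaussianReal (a i) v) = a i :=
    (integral_comp_eval (μ := fun i ↦ gaussianReal (a i) v) aestronglyMeasurable_id).trans
      integral_id_gaussianReal
  have := integral_quadraticForm_sub (memLp_eval_pi_gaussianReal v a) K b
  simp_rw [hmean, covariance_eval_pi_gaussianReal] at this
  simpa [trace, mul_comm, Finset.mul_sum] using this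

variable [DecidableEq ι]

/-- The density of the Gaussian vector with mean `b` and covariance `v • D`. -/
def gaussianVectorPDF (v : ℝ≥0) (D : Matrix ι ι ℝ) (b y : ι → ℝ) : ℝ :=
  (√D.det)⁻¹ * ((√(2 * Real.pi * v))⁻¹ ^ Fintype.card ι *
    Real.exp (-((y - b) ⬝ᵥ D⁻¹ *ᵥ (y - b)) / (2 * v)))

/-- The law of a Gaussian vector with mean `b` and covariance `v • D`, for `v ≠ 0` and `D`
positive definite. -/
def gaussianVector (v : ℝ≥0) (D : Matrix ι ι ℝ) (b : ι → ℝ) : Measure (ι → ℝ) :=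
  volume.withDensity fun y ↦ ENNReal.ofReal (gaussianVectorPDF v D b y)

lemma gaussianVectorPDF_one (v : ℝ≥0) (b y : ι → ℝ) :
    gaussianVectorPDF v 1 b y = ∏ i, gaussianPDFReal (b i) v (y i) := by
  simp only [gaussianVectorPDF, gaussianPDFReal, Finset.prod_mul_distrib, Finset.prod_const,
    ← Real.exp_sum, ← Finset.sum_div]
  simp [dotProduct, sq]

lemma gaussianVector_one {v : ℝ≥0} (hv : v ≠ 0) (b : ι → ℝ) :
    gaussianVector v 1 b = Measure.pi fun i ↦ gaussianReal (b i) v := by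
  simp_rw [gaussianVector, gaussianVectorPDF_one, gaussianReal_of_var_ne_zero _ hv]
  exact (pi_withDensity_ofReal _ (fun i ↦ gaussianPDFReal_nonneg (b i) v)
    fun i ↦ integrable_gaussianPDFReal (b i) v).symm

lemma gaussianVectorPDF_nonneg (v : ℝ≥0) (D : Matrix ι ι ℝ) (b y : ι → ℝ) :
    0 ≤ gaussianVectorPDF v D b y := by
  unfold gaussianVectorPDF
  positivity

@[fun_prop]
lemma measurable_gaussianVectorPDF (v : ℝ≥0) (D : Matrix ι ι ℝ) (b : ι → ℝ) :
    Measurable (gaussianVectorPDF v D b) := by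
  unfold gaussianVectorPDF
  simp_rw [dotProduct_mulVec_self_eq_sum]
  fun_prop

lemma exists_transpose_mul_self_eq_inv {D : Matrix ι ι ℝ} (hD : D.PosDef) :
    ∃ M : Matrix ι ι ℝ, Mᵀ * M = D⁻¹ ∧ M.det ≠ 0 ∧ |M.det| = (√D.det)⁻¹ := by
  obtain ⟨M, hM⟩ : ∃ M : Matrix ι ι ℝ, Mᵀ * M = D⁻¹ := by
    open scoped MatrixOrder in
    obtain ⟨M, hM⟩ := CStarAlgebra.nonneg_iff_eq_star_mul_self.mp hD.inv.posSemidef.nonneg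
    exact ⟨M, by rw [hM, star_eq_conjTranspose, conjTranspose_eq_transpose_of_trivial]⟩
  have hdet : |M.det| = (√D.det)⁻¹ := by
    rw [← Real.sqrt_inv, ← Ring.inverse_eq_inv', ← det_nonsing_inv, ← hM, det_mul, det_transpose,
      Real.sqrt_mul_self_eq_abs]
  exact ⟨M, hM, abs_pos.mp (hdet ▸ inv_pos.mpr (Real.sqrt_pos.mpr hD.det_pos)), hdet⟩

lemma gaussianVectorPDF_eq_abs_det_mul {v : ℝ≥0} {D M : Matrix ι ι ℝ} (hM : Mᵀ * M = D⁻¹)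
    (hdet : |M.det| = (√D.det)⁻¹) (b y : ι → ℝ) :
    gaussianVectorPDF v D b y = |M.det| * gaussianVectorPDF v 1 0 (M *ᵥ (y - b)) := by
  have hquad : (y - b) ⬝ᵥ D⁻¹ *ᵥ (y - b) = M *ᵥ (y - b) ⬝ᵥ M *ᵥ (y - b) := by
    rw [← hM, ← mulVec_mulVec, dotProduct_mulVec, vecMul_transpose]
  simp [gaussianVectorPDF, hdet, hquad]

lemma map_mulVec_sub_volume {M : Matrix ι ι ℝ} (hM : M.det ≠ 0) (b : ι → ℝ) :
    (volume : Measure (ι → ℝ)).map (fun y ↦ M *ᵥ (y - b)) =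
      ENNReal.ofReal |M.det|⁻¹ • volume := by
  have hcomp : (fun y : ι → ℝ ↦ M *ᵥ (y - b)) = toLin' M ∘ (· - b) := rfl
  rw [hcomp, ← Measure.map_map (by fun_prop) (by fun_prop), map_sub_right_eq_self,
    Real.map_matrix_volume_pi_eq_smul_volume_pi hM, abs_inv]

lemma isProbabilityMeasure_gaussianVector {v : ℝ≥0} (hv : v ≠ 0) {D : Matrix ι ι ℝ}
    (hD : D.PosDef) (b : ι → ℝ) : IsProbabilityMeasure (gaussianVector v D b) := by
  obtain ⟨M, hM, hM0, hdet⟩ := exists_transpose_mul_self_eq_inv hD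
  have hstd : ∫⁻ x : ι → ℝ, ENNReal.ofReal (gaussianVectorPDF v 1 0 x) = 1 := by
    rw [← setLIntegral_univ, ← withDensity_apply _ .univ, ← gaussianVector, gaussianVector_one hv,
      measure_univ]
  refine ⟨?_⟩
  calc gaussianVector v D b Set.univ
      = ∫⁻ y, ENNReal.ofReal |M.det| *
          ENNReal.ofReal (gaussianVectorPDF v 1 0 (M *ᵥ (y - b))) := by
        simp_rw [gaussianVector, withDensity_apply _ .univ, setLIntegral_univ,
          gaussianVectorPDF_eq_abs_det_mul hM hdet, ENNReal.ofReal_mul (abs_nonneg M.det)]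
    _ = ENNReal.ofReal |M.det| * ∫⁻ x, ENNReal.ofReal (gaussianVectorPDF v 1 0 x)
          ∂(volume.map fun y ↦ M *ᵥ (y - b)) := by
        rw [lintegral_map (by fun_prop) (by fun_prop), lintegral_const_mul _ (by fun_prop)]
    _ = 1 := by
        rw [map_mulVec_sub_volume hM0, lintegral_smul_measure, hstd, smul_eq_mul, mul_one,
          ← ENNReal.ofReal_mul (abs_nonneg _), mul_inv_cancel₀ (abs_ne_zero.mpr hM0),
          ENNReal.ofReal_one]

/-- The log-density of `gaussianVector v D b` with respect to `gaussianVector v 1 a`. -/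
def gaussianVectorLLR (v : ℝ≥0) (D : Matrix ι ι ℝ) (a b y : ι → ℝ) : ℝ :=
  ((y - a) ⬝ᵥ (1 : Matrix ι ι ℝ) *ᵥ (y - a) - (y - b) ⬝ᵥ D⁻¹ *ᵥ (y - b)) / (2 * v) -
    Real.log D.det / 2

lemma gaussianVector_eq_withDensity_exp_llr (v : ℝ≥0) {D : Matrix ι ι ℝ} (hD : D.PosDef)
    (a b : ι → ℝ) :
    gaussianVector v D b = (gaussianVector v 1 a).withDensity
      fun y ↦ ENNReal.ofReal (Real.exp (gaussianVectorLLR v D a b y)) := by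
  have hllr : Measurable (gaussianVectorLLR v D a b) := by
    unfold gaussianVectorLLR
    simp_rw [dotProduct_mulVec_self_eq_sum]
    fun_prop
  have hdet : Real.exp (Real.log D.det / 2) = √D.det := by
    rw [← Real.log_sqrt hD.det_pos.le, Real.exp_log (Real.sqrt_pos.mpr hD.det_pos)]
  have hpdf (y : ι → ℝ) : gaussianVectorPDF v D b y =
      gaussianVectorPDF v 1 a y * Real.exp (gaussianVectorLLR v D a b y) := by
    simp only [gaussianVectorPDF, gaussianVectorLLR, sub_div, neg_div, Real.exp_sub, Real.exp_neg,
      hdet, det_one, Real.sqrt_one, inv_one]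
    field_simp
  rw [gaussianVector, gaussianVector, ← withDensity_mul _ (by fun_prop) (by fun_prop)]
  congr with y
  rw [hpdf, ENNReal.ofReal_mul (gaussianVectorPDF_nonneg v 1 a y), Pi.mul_apply]

lemma integrable_gaussianVectorLLR (v : ℝ≥0) (D : Matrix ι ι ℝ) (a b : ι → ℝ) :
    Integrable (gaussianVectorLLR v D a b) (Measure.pi fun i ↦ gaussianReal (a i) v) :=
  (((integrable_quadraticForm_sub (memLp_eval_pi_gaussianReal v a) 1 a).sub
    (integrable_quadraticForm_sub (memLp_eval_pi_gaussianReal v a) D⁻¹ b)).div_const _).sub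
    (integrable_const _)

/-- The Kullback–Leibler divergence of `gaussianVector v 1 a` relative to
`gaussianVector v D (a - δ)`. -/
def gaussianVectorKL (v : ℝ≥0) (D : Matrix ι ι ℝ) (δ : ι → ℝ) : ℝ :=
  (Real.log D.det + (D⁻¹.trace + δ ⬝ᵥ D⁻¹ *ᵥ δ / v - Fintype.card ι)) / 2

lemma neg_integral_gaussianVectorLLR {v : ℝ≥0} (hv : v ≠ 0) (D : Matrix ι ι ℝ) (a b : ι → ℝ) :
    -∫ y, gaussianVectorLLR v D a b y ∂(Measure.pi fun i ↦ gaussianReal (a i) v) =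
      gaussianVectorKL v D (a - b) := by
  have ha : Integrable (fun y ↦ (y - a) ⬝ᵥ (1 : Matrix ι ι ℝ) *ᵥ (y - a))
      (Measure.pi fun i ↦ gaussianReal (a i) v) :=
    integrable_quadraticForm_sub (memLp_eval_pi_gaussianReal v a) 1 a
  have hb : Integrable (fun y ↦ (y - b) ⬝ᵥ D⁻¹ *ᵥ (y - b))
      (Measure.pi fun i ↦ gaussianReal (a i) v) :=
    integrable_quadraticForm_sub (memLp_eval_pi_gaussianReal v a) D⁻¹ b
  have hv' : (v : ℝ) ≠ 0 := NNReal.coe_ne_zero.mpr hv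
  unfold gaussianVectorLLR gaussianVectorKL
  rw [integral_sub ((ha.sub' hb).div_const _) (integrable_const _),
    integral_div, integral_sub ha hb, integral_quadraticForm_sub_pi_gaussianReal,
    integral_quadraticForm_sub_pi_gaussianReal, integral_const, probReal_univ, one_smul,
    sub_self, zero_dotProduct, add_zero, trace_one]
  field_simp
  ring

end GaussianVector

section GaussianMatrix

variable {κ ι : Type*} [Fintype κ] [Fintype ι]

/-- The law of a `κ × ι` matrix with independent `N(μ i j, v)` entries. -/
def gaussianMatrix (v : ℝ≥0) (μ : κ → ι → ℝ) : Measure (κ → ι → ℝ) :=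
  Measure.pi fun i ↦ Measure.pi fun j ↦ gaussianReal (μ i j) v

instance isProbabilityMeasure_gaussianMatrix (v : ℝ≥0) (μ : κ → ι → ℝ) :
    IsProbabilityMeasure (gaussianMatrix v μ) := by
  unfold gaussianMatrix
  infer_instance

lemma map_const_add_gaussianMatrix (v : ℝ≥0) (μ c : κ → ι → ℝ) :
    (gaussianMatrix v μ).map (c + ·) = gaussianMatrix v (μ + c) := by
  have hrow (i : κ) : (Measure.pi fun j ↦ gaussianReal (μ i j) v).map (c i + ·) =
      Measure.pi fun j ↦ gaussianReal (μ i j + c i j) v := by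
    simp_rw [← gaussianReal_map_const_add]
    exact Measure.pi_map_pi (f := fun j y ↦ c i j + y) fun j ↦ by fun_prop
  have (i : κ) : IsProbabilityMeasure
      ((Measure.pi fun j ↦ gaussianReal (μ i j) v).map (c i + ·)) :=
    hrow i ▸ inferInstance
  calc (gaussianMatrix v μ).map (c + ·)
      = Measure.pi fun i ↦ (Measure.pi fun j ↦ gaussianReal (μ i j) v).map (c i + ·) :=
        Measure.pi_map_pi (f := fun i y ↦ c i + y) fun i ↦ by fun_prop
    _ = gaussianMatrix v (μ + c) := congrArg Measure.pi (funext hrow)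

lemma gaussianMatrix_preimage_const_add (v : ℝ≥0) (μ c : κ → ι → ℝ) (s : Set (κ → ι → ℝ)) :
    gaussianMatrix v μ ((c + ·) ⁻¹' s) = gaussianMatrix v (μ + c) s := by
  rw [← map_const_add_gaussianMatrix]
  exact ((MeasurableEquiv.addLeft c).map_apply s).symm

lemma mul_measureReal_gaussianMatrix_le [DecidableEq ι] {v : ℝ≥0} (hv : v ≠ 0)
    {D : Matrix ι ι ℝ} (hD : D.PosDef) (a b : κ → ι → ℝ) {s : Set (κ → ι → ℝ)}
    (hs : MeasurableSet s) (c : ℝ) :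
    c * (gaussianMatrix v a).real s ≤
      ∑ i, gaussianVectorKL v D (a i - b i) +
        Real.exp c * (Measure.pi fun i ↦ gaussianVector v D (b i)).real s := by
  have (i : κ) := isProbabilityMeasure_gaussianVector hv hD (b i)
  simp_rw [← neg_integral_gaussianVectorLLR hv]
  refine mul_measureReal_pi_le_of_withDensity_exp
    (fun i ↦ integrable_gaussianVectorLLR v D (a i) (b i)) (fun i ↦ ?_) hs c
  rw [← gaussianVector_one hv, gaussianVector_eq_withDensity_exp_llr v hD (a i)]

end GaussianMatrix

section UniformAverages

open Fintype
open scoped BigOperators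

variable {κ ι : Type*} [Fintype κ] [DecidableEq κ] [Fintype ι]

lemma expect_comp_eval (f : ι → ℝ) (a : κ) : 𝔼 s : κ → ι, f (s a) = 𝔼 x, f x := by
  rcases isEmpty_or_nonempty ι with hι | hι
  · have : IsEmpty (κ → ι) := ⟨fun s ↦ hι.false (s a)⟩
    simp
  calc 𝔼 s : κ → ι, f (s a) = 𝔼 p : ι × ({b // b ≠ a} → ι), f p.1 :=
        Fintype.expect_equiv (Equiv.funSplitAt a ι) _ _ fun s ↦ rfl
    _ = 𝔼 x, f x := by
        rw [← Finset.univ_product_univ, Finset.expect_product]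
        simp

lemma expect_mul_comp_eval_eq_zero {f : ι → ℝ} (hf : ∑ x, f x = 0) {a a' : κ} (ha : a ≠ a') :
    𝔼 s : κ → ι, f (s a) * f (s a') = 0 := by
  calc 𝔼 s : κ → ι, f (s a) * f (s a')
      = 𝔼 p : ι × ({b // b ≠ a} → ι), f p.1 * f (p.2 ⟨a', ha.symm⟩) :=
        Fintype.expect_equiv (Equiv.funSplitAt a ι) _ _ fun s ↦ rfl
    _ = 0 := by
        rw [← Finset.univ_product_univ, Finset.expect_product]
        simp_rw [← Finset.mul_expect, ← Finset.expect_mul, Finset.expect_univ (f := f), hf]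
        simp

lemma expect_balance_sq_le (f : ι → ℝ) : 𝔼 x, balance f x ^ 2 ≤ 𝔼 x, f x ^ 2 := by
  rcases isEmpty_or_nonempty ι with hι | hι
  · simp
  calc 𝔼 x, balance f x ^ 2 = 𝔼 x, (f x ^ 2 - 2 * (𝔼 y, f y) * f x + (𝔼 y, f y) ^ 2) :=
        Finset.expect_congr rfl fun x _ ↦ by rw [balance_apply]; ring
    _ = 𝔼 x, f x ^ 2 - (𝔼 x, f x) ^ 2 := by
        rw [Finset.expect_add_distrib, Finset.expect_sub_distrib, ← Finset.mul_expect,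
          Fintype.expect_const]
        ring
    _ ≤ 𝔼 x, f x ^ 2 := sub_le_self _ (sq_nonneg _)

lemma expect_quadraticForm_sum_smul {l : Type*} [Fintype l] {f : ι → ℝ} (hf : ∑ x, f x = 0)
    (T : Finset κ) (W : κ → l → ℝ) (K : Matrix l l ℝ) :
    𝔼 s : κ → ι, (∑ a ∈ T, f (s a) • W a) ⬝ᵥ K *ᵥ (∑ a ∈ T, f (s a) • W a) =
      (𝔼 x, f x ^ 2) * ∑ a ∈ T, W a ⬝ᵥ K *ᵥ W a := by
  have expand (s : κ → ι) : (∑ a ∈ T, f (s a) • W a) ⬝ᵥ K *ᵥ (∑ a ∈ T, f (s a) • W a) =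
      ∑ a ∈ T, ∑ a' ∈ T, f (s a) * f (s a') * (W a ⬝ᵥ K *ᵥ W a') := by
    simp_rw [mulVec_sum, sum_dotProduct, dotProduct_sum, mulVec_smul, smul_dotProduct,
      dotProduct_smul, smul_eq_mul, mul_assoc]
  simp_rw [expand, Finset.expect_sum_comm, ← Finset.expect_mul, Finset.mul_sum]
  refine Finset.sum_congr rfl fun a ha ↦ ?_
  rw [Finset.sum_eq_single_of_mem a ha fun a' _ ha' ↦ by
    rw [expect_mul_comp_eval_eq_zero hf ha'.symm, zero_mul]]
  simp_rw [← sq]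
  rw [expect_comp_eval fun x ↦ f x ^ 2]

end UniformAverages

section GramSub

variable {k l : ℕ} (W : Matrix (Fin k) (Fin l) ℝ) (T : Finset (Fin k))

lemma posSemidef_gramSub : (gramSub W T).PosSemidef := by
  rw [gramSub, ← conjTranspose_eq_transpose_of_trivial]
  exact posSemidef_conjTranspose_mul_self _

lemma posDef_one_add_smul_gramSub {c : ℝ} (hc : 0 ≤ c) : (1 + c • gramSub W T).PosDef :=
  PosDef.one.add_posSemidef ((posSemidef_gramSub W T).smul hc)

lemma trace_mul_gramSub (K : Matrix (Fin l) (Fin l) ℝ) :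
    (K * gramSub W T).trace = ∑ a ∈ T, W a ⬝ᵥ K *ᵥ W a := by
  rw [gramSub, ← Matrix.mul_assoc, trace_mul_comm, ← Finset.sum_coe_sort T]
  refine Finset.sum_congr rfl fun a _ ↦ ?_
  simp [dotProduct, mulVec, Matrix.mul_apply]

lemma trace_mul_gramSub_nonneg {K : Matrix (Fin l) (Fin l) ℝ} (hK : K.PosSemidef) :
    0 ≤ (K * gramSub W T).trace := by
  rw [trace_mul_gramSub]
  exact Finset.sum_nonneg fun a _ ↦ hK.dotProduct_mulVec_nonneg (W a)

lemma trace_inv_add_mul_trace_inv_mul_gramSub {c : ℝ} (hc : 0 ≤ c) :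
    (1 + c • gramSub W T)⁻¹.trace + c * ((1 + c • gramSub W T)⁻¹ * gramSub W T).trace = l := by
  have hunit : IsUnit (1 + c • gramSub W T).det :=
    (posDef_one_add_smul_gramSub W T hc).det_pos.ne'.isUnit
  calc _ = ((1 + c • gramSub W T)⁻¹ * (1 + c • gramSub W T)).trace := by
        rw [Matrix.mul_add, Matrix.mul_one, Matrix.mul_smul, trace_add, trace_smul, smul_eq_mul]
    _ = l := by rw [nonsing_inv_mul _ hunit, trace_one, Fintype.card_fin]

end GramSub

section ConditionalMean

open Fintype
open scoped BigOperators

variable {ν ι κ l : Type*} [Fintype ι] [Fintype κ] [DecidableEq κ]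

/-- The mean of the noiseless output `A.submatrix id s * W`, for `s : κ → ι` uniform, conditionally
on the values `u` of `s` off `T`. -/
def conditionalMean (A : Matrix ν ι ℝ) (W : Matrix κ l ℝ) (T : Finset κ) (u : {a // a ∉ T} → ι) :
    Matrix ν l ℝ :=
  of fun i ↦ ∑ a, (if h : a ∈ T then 𝔼 x, A i x else A i (u ⟨a, h⟩)) • W a

lemma submatrix_mul_sub_conditionalMean (A : Matrix ν ι ℝ) (W : Matrix κ l ℝ) (T : Finset κ)
    (s : κ → ι) (i : ν) :
    (A.submatrix id s * W) i - conditionalMean A W T (fun a ↦ s a) i =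
      ∑ a ∈ T, balance (A i) (s a) • W a := by
  ext j
  simp only [conditionalMean, Pi.sub_apply, of_apply, Finset.sum_apply, Pi.smul_apply, smul_eq_mul,
    Matrix.mul_apply, submatrix_apply, id, ← Finset.sum_sub_distrib, ← sub_mul]
  rw [← Finset.sum_subset T.subset_univ fun a _ ha ↦ by simp [ha]]
  exact Finset.sum_congr rfl fun a ha ↦ by rw [dif_pos ha, balance_apply]

end ConditionalMean

section AverageDivergence

open Fintype
open scoped BigOperators

variable {ι : Type*} [Fintype ι] [Nonempty ι] {k l : ℕ} (W : Matrix (Fin k) (Fin l) ℝ)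
  (T : Finset (Fin k))

lemma expect_gaussianVectorKL_sum_smul (v : ℝ≥0) (D : Matrix (Fin l) (Fin l) ℝ) {f : ι → ℝ}
    (hf : ∑ x, f x = 0) :
    𝔼 s : Fin k → ι, gaussianVectorKL v D (∑ a ∈ T, f (s a) • W a) =
      (Real.log D.det +
        (D⁻¹.trace + (𝔼 x, f x ^ 2) * (D⁻¹ * gramSub W T).trace / v - l)) / 2 := by
  have hquad := expect_quadraticForm_sum_smul hf T W D⁻¹
  simp only [gaussianVectorKL, ← Finset.expect_div, Finset.expect_add_distrib,
    Finset.expect_sub_distrib, Fintype.expect_const, Fintype.card_fin, trace_mul_gramSub, ← hquad]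

-- The power constraint bounds the mean square of the entries of `A`, and the covariance `vz • D` is
-- the one for which the resulting trace term is exactly `l`.
lemma expect_sum_gaussianVectorKL_le {ν : Type*} [Fintype ν] {va vz : ℝ≥0} (hvz : vz ≠ 0)
    (A : Matrix ν ι ℝ) (hA : ∑ i, 𝔼 x, A i x ^ 2 ≤ va * card ν)
    {D : Matrix (Fin l) (Fin l) ℝ} (hD : D = 1 + ((va : ℝ) / vz) • gramSub W T) :
    𝔼 s : Fin k → ι, ∑ i, gaussianVectorKL vz D
        ((A.submatrix id s * W) i - conditionalMean A W T (fun a ↦ s a) i) ≤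
      card ν * (Real.log D.det / 2) := by
  set τ := (D⁻¹ * gramSub W T).trace with hτ
  have hτ_nonneg : 0 ≤ τ := trace_mul_gramSub_nonneg W T
    (hD ▸ (posDef_one_add_smul_gramSub W T (by positivity)).inv.posSemidef)
  have htrace : D⁻¹.trace + va / vz * τ = l := by
    rw [hτ, hD]
    exact trace_inv_add_mul_trace_inv_mul_gramSub W T (by positivity)
  have hpower : (∑ i, 𝔼 x, balance (A i) x ^ 2) * τ / vz ≤ va * card ν * τ / vz := by
    gcongr
    exact (Finset.sum_le_sum fun i _ ↦ expect_balance_sq_le (A i)).trans hA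
  calc _ = ∑ i, (Real.log D.det +
        (D⁻¹.trace + (𝔼 x, balance (A i) x ^ 2) * τ / vz - l)) / 2 := by
        simp_rw [submatrix_mul_sub_conditionalMean]
        rw [Finset.expect_sum_comm]
        exact Finset.sum_congr rfl fun i _ ↦
          expect_gaussianVectorKL_sum_smul W T vz D (sum_balance (A i))
    _ = (card ν * Real.log D.det +
        (card ν * (D⁻¹.trace - l) + (∑ i, 𝔼 x, balance (A i) x ^ 2) * τ / vz)) / 2 := by
        simp only [Finset.sum_mul, Finset.sum_div, add_div, sub_div, Finset.sum_add_distrib,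
          Finset.sum_sub_distrib, Finset.sum_const, Finset.card_univ, nsmul_eq_mul]
        ring
    _ ≤ (card ν * Real.log D.det + (card ν * (D⁻¹.trace - l) + va * card ν * τ / vz)) / 2 := by
        gcongr
    _ = card ν * (Real.log D.det / 2) := by
        linear_combination (card ν / 2 : ℝ) * htrace

end AverageDivergence

section NonasymptoticBound

open Fintype
open scoped BigOperators Finset

variable {ι : Type*} [Fintype ι]

lemma card_filter_image_univ_eq_le [DecidableEq ι] (k : ℕ) (F : Finset ι) :
    #{s : Fin k → ι | F = Finset.univ.image s} ≤ k ^ k := by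
  rcases le_or_gt #F k with hF | hF
  · calc #{s : Fin k → ι | F = Finset.univ.image s}
        ≤ #(piFinset fun _ : Fin k ↦ F) := by
          refine Finset.card_le_card fun s hs ↦ mem_piFinset.mpr fun a ↦ ?_
          rw [(Finset.mem_filter.mp hs).2]
          exact Finset.mem_image_of_mem s (Finset.mem_univ a)
      _ = #F ^ k := by simp
      _ ≤ k ^ k := Nat.pow_le_pow_left hF k
  · rw [Finset.filter_false_of_mem fun s _ hs ↦ hF.not_ge ?_, Finset.card_empty]
    · exact Nat.zero_le _
    · rw [hs]
      exact Finset.card_image_le.trans_eq (Finset.card_fin k)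

lemma card_pow_card_mul_card_compl_fun {κ : Type*} [Fintype κ] [DecidableEq κ] (T : Finset κ)
    (ι : Type*) [Fintype ι] :
    card ι ^ #T * card ({a // a ∉ T} → ι) = card (κ → ι) := by
  rw [card_fun, card_fun, card_subtype_compl, card_coe, ← pow_add,
    Nat.add_sub_cancel' T.card_le_univ]

open scoped Classical in
lemma card_mul_log_mul_expect_measureReal_le {ν : Type*} [Fintype ν] [Nonempty ι] {k l N : ℕ}
    {va vz : ℝ≥0} (hvz : vz ≠ 0) (W : Matrix (Fin k) (Fin l) ℝ) (A : Matrix ν ι ℝ)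
    (hA : ∑ i, 𝔼 x, A i x ^ 2 ≤ va * card ν) (T : Finset (Fin k))
    {G : (Fin k → ι) → Set (ν → Fin l → ℝ)} (hG : ∀ s, MeasurableSet (G s))
    (hN : ∀ y, #{s | y ∈ G s} ≤ N) :
    #T * Real.log (card ι) *
        𝔼 s : Fin k → ι, (gaussianMatrix vz (A.submatrix id s * W)).real (G s) ≤
      card ν * (Real.log (1 + ((va : ℝ) / vz) • gramSub W T).det / 2) + N := by
  set D := 1 + ((va : ℝ) / vz) • gramSub W T with hD
  have hD_pos : D.PosDef := posDef_one_add_smul_gramSub W T (by positivity)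
  have (u : {a // a ∉ T} → ι) : IsProbabilityMeasure
      (Measure.pi fun i ↦ gaussianVector vz D (conditionalMean A W T u i)) :=
    have (i : ν) := isProbabilityMeasure_gaussianVector hvz hD_pos (conditionalMean A W T u i)
    inferInstance
  have hexp : Real.exp (#T * Real.log (card ι)) = (card ι : ℝ) ^ #T := by
    rw [← Real.log_pow, Real.exp_log (by positivity)]
  have hcount : Real.exp (#T * Real.log (card ι)) *
      (card ({a // a ∉ T} → ι) * N / card (Fin k → ι)) = N := by
    rw [hexp, ← mul_div_assoc, ← mul_assoc, ← card_pow_card_mul_card_compl_fun T ι, Nat.cast_mul,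
      Nat.cast_pow, mul_div_cancel_left₀ _ (by positivity)]
  have hdiv : 𝔼 s : Fin k → ι, ∑ i, gaussianVectorKL vz D
      ((A.submatrix id s * W) i - conditionalMean A W T (fun a ↦ s a) i) ≤
        card ν * (Real.log D.det / 2) := expect_sum_gaussianVectorKL_le W T hvz A hA hD
  have hchange := mul_expect_measureReal_le_of_forall_card_le
    (P := fun s : Fin k → ι ↦ gaussianMatrix vz (A.submatrix id s * W))
    (Q := fun u ↦ Measure.pi fun i ↦ gaussianVector vz D (conditionalMean A W T u i))
    (fun s a ↦ s a) hG hN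
    fun s ↦ mul_measureReal_gaussianMatrix_le hvz hD_pos _ _ (hG s) (#T * Real.log (card ι))
  rw [hcount] at hchange
  exact hchange.trans (by gcongr)

open scoped Classical in
lemma card_mul_log_mul_expect_one_sub_measureReal_le {ν : Type*} [Fintype ν] [Nonempty ι]
    {k l N : ℕ} {va vz : ℝ≥0} (hvz : vz ≠ 0) (W : Matrix (Fin k) (Fin l) ℝ) (A : Matrix ν ι ℝ)
    (hA : ∑ i, 𝔼 x, A i x ^ 2 ≤ va * card ν) (T : Finset (Fin k))
    {B : (Fin k → ι) → Set (ν → Fin l → ℝ)} (hN : ∀ y, #{s | y ∉ B s} ≤ N) :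
    #T * Real.log (card ι) *
        𝔼 s : Fin k → ι, (1 - (gaussianMatrix vz (A.submatrix id s * W)).real (B s)) ≤
      card ν * (Real.log (1 + ((va : ℝ) / vz) • gramSub W T).det / 2) + N := by
  have hcompl (s : Fin k → ι) : 1 - (gaussianMatrix vz (A.submatrix id s * W)).real (B s) =
      (gaussianMatrix vz (A.submatrix id s * W)).real
        (toMeasurable (gaussianMatrix vz (A.submatrix id s * W)) (B s))ᶜ := by
    rw [probReal_compl_eq_one_sub (measurableSet_toMeasurable _ _), measureReal_def,
      measureReal_def, measure_toMeasurable]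
  simp_rw [hcompl]
  refine card_mul_log_mul_expect_measureReal_le hvz W A hA T
    (fun s ↦ (measurableSet_toMeasurable _ _).compl) fun y ↦ (Finset.card_le_card ?_).trans (hN y)
  intro s
  simp only [Finset.mem_filter_univ]
  exact fun hy hB ↦ hy (subset_toMeasurable _ _ hB)

lemma card_embedding_div_card_fun_mul_expect_le {κ : Type*} [Fintype κ] [DecidableEq κ]
    {f : (κ → ι) → ℝ} (hf : ∀ s, 0 ≤ f s) :
    (card (κ ↪ ι) / card (κ → ι) : ℝ) * 𝔼 e : κ ↪ ι, f e ≤ 𝔼 s, f s := by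
  classical
  rcases isEmpty_or_nonempty (κ ↪ ι) with hemb | hemb
  · simpa using Finset.expect_nonneg fun s _ ↦ hf s
  calc (card (κ ↪ ι) / card (κ → ι) : ℝ) * 𝔼 e : κ ↪ ι, f e
      = (∑ e : κ ↪ ι, f e) / card (κ → ι) := by
        rw [Fintype.expect_eq_sum_div_card]
        field_simp
    _ = (∑ s ∈ Finset.univ.map ⟨_, DFunLike.coe_injective (F := κ ↪ ι)⟩, f s) /
          card (κ → ι) := by
        rw [Finset.sum_map]
        rfl
    _ ≤ (∑ s, f s) / card (κ → ι) := by
        gcongr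
        exacts [fun s _ _ ↦ hf s, Finset.subset_univ _]
    _ = 𝔼 s, f s := (Fintype.expect_eq_sum_div_card f).symm

end NonasymptoticBound

section SupportRecovery

open scoped BigOperators Finset

variable {k l m n : ℕ}

instance isFiniteMeasure_uniformEmb (k m : ℕ) : IsFiniteMeasure (uniformEmb k m) := by
  unfold uniformEmb
  infer_instance

lemma expect_measureReal_preimage_le_prod_uniformEmb {Ω : Type*} [MeasurableSpace Ω]
    (μ : Measure Ω) [IsFiniteMeasure μ] (E : Set ((Fin k ↪ Fin m) × Ω)) :
    𝔼 e, μ.real (Prod.mk e ⁻¹' E) ≤ ((uniformEmb k m).prod μ).real E := by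
  have : MeasurableSingletonClass (Fin k ↪ Fin m) := ⟨fun _ ↦ trivial⟩
  obtain ⟨E', hsub, hE', hE'_eq⟩ := exists_measurable_superset ((uniformEmb k m).prod μ) E
  calc 𝔼 e, μ.real (Prod.mk e ⁻¹' E) ≤ 𝔼 e, μ.real (Prod.mk e ⁻¹' E') :=
        Finset.expect_le_expect fun e _ ↦ measureReal_mono (Set.preimage_mono hsub)
    _ = ((uniformEmb k m).prod μ).real E' := by
        rw [measureReal_def, Measure.prod_apply hE', uniformEmb, lintegral_smul_measure,
          lintegral_count, tsum_fintype, ENNReal.smul_def, smul_eq_mul, ENNReal.toReal_mul,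
          ENNReal.toReal_sum fun e _ ↦ measure_ne_top _ _, Fintype.expect_eq_sum_div_card,
          div_eq_inv_mul]
        rfl
    _ = ((uniformEmb k m).prod μ).real E := by rw [measureReal_def, hE'_eq, measureReal_def]

lemma mul_signal_eq_submatrix_mul (A : Matrix (Fin n) (Fin m) ℝ) (W : Matrix (Fin k) (Fin l) ℝ)
    (e : Fin k ↪ Fin m) : A * signal W e = A.submatrix id e * W := by
  ext i j
  simp only [Matrix.mul_apply, signal, of_apply, submatrix_apply, id, Finset.mul_sum, mul_ite,
    mul_zero]
  rw [Finset.sum_comm]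
  simp

lemma expect_gaussianMatrix_ne_le_errProbDet (vz : ℝ≥0) (W : Matrix (Fin k) (Fin l) ℝ)
    (A : Matrix (Fin n) (Fin m) ℝ) (d : Matrix (Fin n) (Fin l) ℝ → Finset (Fin m)) :
    𝔼 e : Fin k ↪ Fin m, (gaussianMatrix vz (A.submatrix id e * W)).real
        {y | d (of y) ≠ Finset.univ.image e} ≤ (errProbDet k l m n vz W A d).toReal := by
  have hmat : gaussMat n l vz = gaussianMatrix vz 0 := rfl
  have hshift (e : Fin k ↪ Fin m) :
      (gaussianMatrix vz (A.submatrix id e * W)).real {y | d (of y) ≠ Finset.univ.image e} =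
        (gaussMat n l vz).real
          (Prod.mk e ⁻¹' {p | d (A * signal W p.1 + of p.2) ≠ suppS p.1}) := by
    have hpreimage := gaussianMatrix_preimage_const_add vz 0 (A.submatrix id e * W)
      {y | d (of y) ≠ Finset.univ.image e}
    rw [hmat, measureReal_def, measureReal_def, ← zero_add (A.submatrix id e * W)]
    refine congrArg _ (hpreimage.symm.trans ?_)
    simp only [suppS, Finset.map_eq_image, mul_signal_eq_submatrix_mul]
    rfl
  have : IsFiniteMeasure (gaussMat n l vz) := hmat ▸ inferInstance
  simp_rw [hshift]
  exact expect_measureReal_preimage_le_prod_uniformEmb _ _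

lemma card_mul_log_mul_one_sub_errProbDet_le {va vz : ℝ≥0} (hvz : vz ≠ 0) (hm : 0 < m)
    (hkm : k ≤ m) (W : Matrix (Fin k) (Fin l) ℝ) (A : Matrix (Fin n) (Fin m) ℝ)
    (hA : ∑ i, ∑ j, A i j ^ 2 ≤ va * (n * m))
    (d : Matrix (Fin n) (Fin l) ℝ → Finset (Fin m)) (T : Finset (Fin k)) :
    #T * Real.log m *
        (m.descFactorial k / (m : ℝ) ^ k * (1 - (errProbDet k l m n vz W A d).toReal)) ≤
      n * (Real.log (1 + ((va : ℝ) / vz) • gramSub W T).det / 2) + (k : ℝ) ^ k := by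
  have : NeZero m := ⟨hm.ne'⟩
  have : Nonempty (Fin k ↪ Fin m) := ⟨Fin.castLEEmb hkm⟩
  set B : (Fin k → Fin m) → Set (Fin n → Fin l → ℝ) :=
    fun s ↦ {y | d (of y) ≠ Finset.univ.image s}
  set P : (Fin k → Fin m) → Measure (Fin n → Fin l → ℝ) :=
    fun s ↦ gaussianMatrix vz (A.submatrix id s * W)
  have hA' : ∑ i, 𝔼 x, A i x ^ 2 ≤ va * Fintype.card (Fin n) := by
    simp_rw [Fintype.expect_eq_sum_div_card, ← Finset.sum_div, Fintype.card_fin]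
    rw [div_le_iff₀ (by positivity), mul_assoc]
    exact hA
  have herr : 1 - (errProbDet k l m n vz W A d).toReal ≤
      𝔼 e : Fin k ↪ Fin m, (1 - (P e).real (B e)) := by
    rw [Finset.expect_sub_distrib, Fintype.expect_const]
    exact sub_le_sub_left (expect_gaussianMatrix_ne_le_errProbDet vz W A d) 1
  have hcard : (m.descFactorial k / (m : ℝ) ^ k : ℝ) =
      Fintype.card (Fin k ↪ Fin m) / Fintype.card (Fin k → Fin m) := by
    simp [Fintype.card_embedding_eq]
  have hfun : m.descFactorial k / (m : ℝ) ^ k * (1 - (errProbDet k l m n vz W A d).toReal) ≤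
      𝔼 s, (1 - (P s).real (B s)) := by
    refine (mul_le_mul_of_nonneg_left herr (by positivity)).trans ?_
    rw [hcard]
    exact card_embedding_div_card_fun_mul_expect_le fun s ↦ sub_nonneg.mpr measureReal_le_one
  have := card_mul_log_mul_expect_one_sub_measureReal_le (B := B) (N := k ^ k) hvz W A hA' T
    fun y ↦ by simpa [B] using card_filter_image_univ_eq_le k (d (of y))
  rw [Fintype.card_fin, Fintype.card_fin, Nat.cast_pow] at this
  exact (mul_le_mul_of_nonneg_left hfun (by positivity)).trans this

end SupportRecovery

section Asymptotics

lemma limsup_logb_div_le {n : ℕ → ℕ} (hn : ∀ m, 0 < n m) {ρ : ℕ → ℝ}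
    (hρ : Tendsto ρ atTop (nhds 1)) {t C K : ℝ} (ht : 0 < t)
    (hle : ∀ᶠ m : ℕ in atTop, t * Real.log m * ρ m ≤ n m * C + K) {b : ℝ} (hb : 1 < b) :
    limsup (fun m : ℕ ↦ Real.logb b m / n m) atTop ≤ C / (t * Real.log b) := by
  have hlog : Tendsto (fun m : ℕ ↦ Real.log m) atTop atTop :=
    Real.tendsto_log_atTop.comp tendsto_natCast_atTop_atTop
  have hlogb : 0 < Real.log b := Real.log_pos hb
  set η : ℕ → ℝ := fun m ↦ t * ρ m - K / Real.log m
  have hη : Tendsto η atTop (nhds t) := by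
    simpa using (hρ.const_mul t).sub (hlog.const_div_atTop K)
  have hbound : Tendsto (fun m ↦ C / (η m * Real.log b)) atTop
      (nhds (C / (t * Real.log b))) :=
    tendsto_const_nhds.div (hη.mul_const _) (mul_pos ht hlogb).ne'
  rw [← hbound.limsup_eq]
  refine limsup_le_limsup ?_ ?_ hbound.isBoundedUnder_le
  · filter_upwards [hle, hη.eventually_const_lt ht, hlog.eventually_gt_atTop 0] with m hle hηm hlogm
    have hηlog : η m * Real.log m ≤ n m * C := by
      have : K / Real.log m * Real.log m = K := div_mul_cancel₀ K hlogm.ne'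
      simp only [η, sub_mul]
      linarith
    have hnm : (0 : ℝ) < n m := mod_cast hn m
    rw [Real.logb, div_div, div_le_div_iff₀ (by positivity) (by positivity)]
    nlinarith
  · refine isCoboundedUnder_le_of_eventually_le atTop (x := 0) (.of_forall fun m ↦ ?_)
    exact div_nonneg (div_nonneg (Real.log_natCast_nonneg m) hlogb.le) (Nat.cast_nonneg _)

lemma tendsto_descFactorial_div_pow (k : ℕ) :
    Tendsto (fun m : ℕ ↦ (m.descFactorial k / (m : ℝ) ^ k : ℝ)) atTop (nhds 1) := by
  refine (Asymptotics.isEquivalent_iff_tendsto_one ?_).mp (isEquivalent_descFactorial k)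
  filter_upwards [eventually_gt_atTop 0] with m hm
  positivity

end Asymptotics

theorem converse_deterministic_general
    {k l : ℕ} (hk : 1 ≤ k) (va vz : ℝ≥0) (hvz : 0 < vz) (W : Matrix (Fin k) (Fin l) ℝ)
    (n : ℕ → ℕ) (hn : ∀ m, 0 < n m) (A : ∀ m : ℕ, Matrix (Fin (n m)) (Fin m) ℝ)
    (hA : ∀ m : ℕ, (∑ i, ∑ j, A m i j ^ 2) / ((n m : ℝ) * (m : ℝ)) ≤ (va : ℝ))
    (d : ∀ m : ℕ, Matrix (Fin (n m)) (Fin l) ℝ → Finset (Fin m))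
    (hd : Tendsto (fun m : ℕ ↦ errProbDet k l m (n m) vz W (A m) (d m)) atTop (nhds 0)) :
    limsup (fun m : ℕ ↦ Real.logb 2 m / (n m : ℝ)) atTop ≤ cW va vz W := by
  have : Nonempty {T : Finset (Fin k) // T.Nonempty} := ⟨⟨{⟨0, hk⟩}, Finset.singleton_nonempty _⟩⟩
  refine le_ciInf fun ⟨T, hT⟩ ↦ ?_
  have hρ : Tendsto (fun m : ℕ ↦ m.descFactorial k / (m : ℝ) ^ k *
      (1 - (errProbDet k l m (n m) vz W (A m) (d m)).toReal)) atTop (nhds 1) := by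
    have herr := (ENNReal.tendsto_toReal ENNReal.zero_ne_top).comp hd
    simpa using (tendsto_descFactorial_div_pow k).mul (tendsto_const_nhds.sub herr)
  have hfano : ∀ᶠ m : ℕ in atTop, T.card * Real.log m * (m.descFactorial k / (m : ℝ) ^ k *
      (1 - (errProbDet k l m (n m) vz W (A m) (d m)).toReal)) ≤
      n m * (Real.log (1 + ((va : ℝ) / vz) • gramSub W T).det / 2) + (k : ℝ) ^ k := by
    filter_upwards [eventually_gt_atTop 0, eventually_ge_atTop k] with m hm hkm
    have hnm : (0 : ℝ) < n m := mod_cast hn m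
    exact card_mul_log_mul_one_sub_errProbDet_le hvz.ne' hm hkm W (A m)
      ((div_le_iff₀ (by positivity)).mp (hA m)) (d m) T
  refine (limsup_logb_div_le hn hρ (Nat.cast_pos.mpr hT.card_pos) hfano one_lt_two).trans_eq ?_
  simp only [Real.logb]
  ring

/-- **Converse for deterministic power-constrained measurement matrices** (Appendix B).
If deterministic matrices `A^{(m)}` satisfy the Frobenius-norm power constraint
`‖A^{(m)}‖_F² / (n_m · m) ≤ σa²` and some support recovery maps achieve vanishing error
probability, then `limsup (log₂ m) / n_m ≤ c(W)`. -/
theorem converse_deterministic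
    (k l : ℕ) (hk : 1 ≤ k) (hl : 1 ≤ l)
    (va vz : ℝ≥0) (hva : 0 < va) (hvz : 0 < vz)
    (W : Matrix (Fin k) (Fin l) ℝ) (hW : ∀ i j, W i j ≠ 0)
    (n : ℕ → ℕ) (hn : ∀ m, 0 < n m)
    (A : ∀ m : ℕ, Matrix (Fin (n m)) (Fin m) ℝ)
    (hA : ∀ m : ℕ, (∑ i, ∑ j, (A m i j) ^ 2) / ((n m : ℝ) * (m : ℝ)) ≤ (va : ℝ))
    (d : ∀ m : ℕ, Matrix (Fin (n m)) (Fin l) ℝ → Finset (Fin m))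
    (hd : Tendsto (fun m : ℕ => errProbDet k l m (n m) vz W (A m) (d m)) atTop (nhds 0)) :
    limsup (fun m : ℕ => Real.logb 2 m / (n m : ℝ)) atTop ≤ cW va vz W :=
  converse_deterministic_general hk va vz hvz W n hn A hA d hd

end
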